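/- arXiv:2407.18330 — 2 statements merged into one kernel-verified Lean document; each statement's English description precedes it below -/
import Mathlib

section
/- (Kunen inconsistency for rank initial segments) Let δ be an ordinal and let j be an elementary self-embedding of the structure V_δ (in the language with one binary relation symbol interpreted as membership) with j not equal to the identity. Let κ be the critical point of j, let (κₙ) be the critical sequence of j (κ₀ = κ, κₙ₊₁ the ordinal corresponding to j applied to the von Neumann ordinal of κₙ), and let λ = supₙ κₙ. Then δ ≤ λ + 1. In particular, for no ordinal λ is there a non-identity elementary self-embedding of V_{λ+2}. -/
/-!
Suppose that `λ + 1 < δ`. The argument is Kunen's, with the `ω`-Jónsson function replaced by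
a function obtained by diagonalisation, so that everything used lives in `V_{λ+2}`.

* `j` fixes `λ` (`IsCrit.emb_sup`): the set of all `κₙ` has no limit point below `λ`, a first-order
  property that `λ < j λ` would violate for its image. Since being a stage of the cumulative
  hierarchy is expressible in `V_δ` (`VLevel`), `j` also fixes `W = V_λ`, and it is cofinal in `W`
  because it takes `V_{κₙ}` to `V_{κₙ₊₁}`.
* By a transfinite recursion of length `2 ^ |W|` (`exists_code`) there is a function `f` from the
  nonempty subsets of `W` to `W` such that, for each `g ⊆ W` whose induced map
  `t ↦ ⋃ {g[u] | u ⊆ t}` on the power set of `W` is injective, `f` takes every value in `W` on the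
  range of that map. Such an `f` would be a set of pairs of rank too large for `V_{λ+2}`; it is coded
  instead by the family of all `{f s} × s`, which consists of subsets of `W` (`exists_good`).
* The restriction of `j` to the power set of `W` is such a map: by cofinality, it is induced by
  `g = {(u, y) | y ∈ j u}`. By elementarity `j f` has the same property with respect to `j W = W`, so
  every `a ∈ W` is of the form `(j f) (j t) = j (f t)` (`exists_preimage`). This is absurd for the
  critical point, which is not in the range of `j` (`IsCrit.notMem_range`).

For the second claim, an embedding fixing all ordinals is the identity
(`eq_id_of_fixes_ordinals`), and otherwise `κₙ < κₙ₊₁ < l + 2` for all `n` gives `λ + 1 < l + 2`.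

Elementarity is used through `Dfn`, the predicates defined by formulas; the closure lemmas of that
notion mirror the shape of each predicate.
-/

open FirstOrder

/-- The language of set theory: a single binary relation symbol (membership). -/
def setLanguage : Language where
  Functions := fun _ => Empty
  Relations := fun n => match n with
    | 2 => Unit
    | _ => Empty

/-- The rank initial segment `V_δ` of the von Neumann universe: the sets of rank
less than `δ`. -/
def Vrank (δ : Ordinal) : Type _ := {x : ZFSet // x.rank < δ}

/-- `V_δ` as a structure in the language of set theory, the binary relation symbol
being interpreted as membership. -/
instance VrankStructure (δ : Ordinal) : setLanguage.Structure (Vrank δ) where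
  funMap := fun f => f.elim
  RelMap := fun {n} r v => match n, r, v with
    | 2, _, v => (v 0).val ∈ (v 1).val


/-! ### Definable relations and their preservation -/

/-- Membership between elements of `V_δ`, as sets. -/
instance VrankMembership (δ : Ordinal) : Membership (Vrank δ) (Vrank δ) :=
  ⟨fun y x => x.val ∈ y.val⟩

/-- The membership symbol. -/
def memSymbol : setLanguage.Relations 2 := ()

/-- `R` is definable without parameters over `V_δ`. A relation is encoded as a predicate on
assignments `v : ℕ → V_δ`, so that its arguments are the values `v 0, v 1, …`; a quantifier binds
`v 0` and shifts the other variables by one. -/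
def Dfn {δ : Ordinal} (R : (ℕ → Vrank δ) → Prop) : Prop :=
  ∃ φ : setLanguage.Formula ℕ, ∀ v, φ.Realize v ↔ R v

namespace Dfn

variable {δ : Ordinal}

/-- Elementarity, for relations given by predicates rather than formulas. -/
theorem preserved {R : (ℕ → Vrank δ) → Prop} (h : Dfn R)
    (j : Vrank δ ↪ₑ[setLanguage] Vrank δ) (v : ℕ → Vrank δ) :
    R (fun n => j (v n)) ↔ R v := by
  obtain ⟨φ, hφ⟩ := h
  rw [← hφ, ← hφ]
  exact j.map_formula φ v

theorem mem (i k : ℕ) : Dfn (δ := δ) (fun v => v i ∈ v k) :=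
  ⟨memSymbol.formula₂ (Language.Term.var i) (Language.Term.var k), fun v => by
    rw [Language.Formula.realize_rel₂]; rfl⟩

theorem eq (i k : ℕ) : Dfn (δ := δ) (fun v => v i = v k) :=
  ⟨(Language.Term.var i).equal (Language.Term.var k), fun v => by
    rw [Language.Formula.realize_equal]; rfl⟩

theorem imp {P Q : (ℕ → Vrank δ) → Prop} (hP : Dfn P) (hQ : Dfn Q) :
    Dfn (fun v => P v → Q v) := by
  obtain ⟨φ, hφ⟩ := hP
  obtain ⟨ψ, hψ⟩ := hQ
  exact ⟨φ.imp ψ, fun v => by rw [Language.Formula.realize_imp, hφ, hψ]⟩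

theorem and {P Q : (ℕ → Vrank δ) → Prop} (hP : Dfn P) (hQ : Dfn Q) :
    Dfn (fun v => P v ∧ Q v) := by
  obtain ⟨φ, hφ⟩ := hP
  obtain ⟨ψ, hψ⟩ := hQ
  exact ⟨φ ⊓ ψ, fun v => by rw [Language.Formula.realize_inf, hφ, hψ]⟩

theorem or {P Q : (ℕ → Vrank δ) → Prop} (hP : Dfn P) (hQ : Dfn Q) :
    Dfn (fun v => P v ∨ Q v) := by
  obtain ⟨φ, hφ⟩ := hP
  obtain ⟨ψ, hψ⟩ := hQ
  exact ⟨φ ⊔ ψ, fun v => by rw [Language.Formula.realize_sup, hφ, hψ]⟩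

theorem iff {P Q : (ℕ → Vrank δ) → Prop} (hP : Dfn P) (hQ : Dfn Q) :
    Dfn (fun v => P v ↔ Q v) := by
  obtain ⟨φ, hφ⟩ := hP
  obtain ⟨ψ, hψ⟩ := hQ
  exact ⟨φ.iff ψ, fun v => by rw [Language.Formula.realize_iff, hφ, hψ]⟩

theorem ex {R : (ℕ → Vrank δ) → Vrank δ → Prop}
    (h : Dfn (fun v => R (fun n => v (n + 1)) (v 0))) : Dfn (fun v => ∃ x, R v x) := by
  obtain ⟨φ, hφ⟩ := h
  refine ⟨(φ.relabel (fun n : ℕ => Nat.casesOn n (Sum.inr ()) Sum.inl :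
    ℕ → ℕ ⊕ Unit)).iExs Unit, fun v => ?_⟩
  rw [Language.Formula.realize_iExs]
  simp only [Language.Formula.realize_relabel, hφ]
  exact ⟨fun ⟨i, hi⟩ => ⟨i (), hi⟩, fun ⟨x, hx⟩ => ⟨fun _ => x, hx⟩⟩

theorem all {R : (ℕ → Vrank δ) → Vrank δ → Prop}
    (h : Dfn (fun v => R (fun n => v (n + 1)) (v 0))) : Dfn (fun v => ∀ x, R v x) := by
  obtain ⟨φ, hφ⟩ := h
  refine ⟨(φ.relabel (fun n : ℕ => Nat.casesOn n (Sum.inr ()) Sum.inl :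
    ℕ → ℕ ⊕ Unit)).iAlls Unit, fun v => ?_⟩
  rw [Language.Formula.realize_iAlls]
  simp only [Language.Formula.realize_relabel, hφ]
  exact ⟨fun h x => h fun _ => x, fun h i => h (i ())⟩

end Dfn

/-! ### Set-theoretic notions inside `V_δ` -/

section Notions

variable {δ : Ordinal}

/-- Inclusion, quantifying over the elements of `V_δ` only. -/
def VSubset (x y : Vrank δ) : Prop := ∀ z, z ∈ x → z ∈ y

/-- `x` is a von Neumann ordinal: a transitive set of transitive sets. -/
def VOrd (x : Vrank δ) : Prop :=
  (∀ y, y ∈ x → VSubset y x) ∧ ∀ y, y ∈ x → ∀ z, z ∈ y → VSubset z y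

/-- `o` is the set of ordinals belonging to `W`. -/
def VHeight (o W : Vrank δ) : Prop := ∀ x, x ∈ o ↔ x ∈ W ∧ VOrd x

/-- `W` is a stage `V_α` of the cumulative hierarchy. The witness `h` stands for
`{V_β | β < α}`; it is characterised without ordinals by `v = ⋃ {𝒫 u | u ∈ h ∩ v}` for `v ∈ h`,
and then `W = ⋃ {𝒫 u | u ∈ h}`. -/
def VLevel (W : Vrank δ) : Prop :=
  ∃ h : Vrank δ, (∀ v : Vrank δ, v ∈ h → ∀ x, x ∈ v ↔ ∃ u, u ∈ h ∧ u ∈ v ∧ VSubset x u) ∧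
    ∀ x, x ∈ W ↔ ∃ u, u ∈ h ∧ VSubset x u

/-- Below each element of `L`, the set `S` is either empty or has a greatest element. -/
def VNoLimit (S L : Vrank δ) : Prop :=
  ∀ β, β ∈ L → (∃ x, x ∈ S ∧ x ∈ β) →
    ∃ m, m ∈ S ∧ m ∈ β ∧ ∀ x, x ∈ S → x ∈ β → x ∈ m ∨ x = m

/-- `p` is the Kuratowski pair of `a` and `b`. The existence of `{a}` and `{a, b}` is asserted
separately because `V_δ` need not be closed under pairing. -/
def VPair (p a b : Vrank δ) : Prop :=
  (∃ z, z ∈ p ∧ ∀ w, w ∈ z ↔ w = a) ∧ (∃ z, z ∈ p ∧ ∀ w, w ∈ z ↔ w = a ∨ w = b) ∧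
    ∀ z, z ∈ p → (∀ w, w ∈ z ↔ w = a) ∨ ∀ w, w ∈ z ↔ w = a ∨ w = b

/-- The Kuratowski pair of `a` and `b` exists in `V_δ` and belongs to `g`. -/
def VPairMem (g a b : Vrank δ) : Prop := ∃ p, p ∈ g ∧ VPair p a b

/-- `s = ⋃ {g[u] | u ⊆ t}`, where `g[u] = {y | (u, y) ∈ g}`. -/
def VImage (g t s : Vrank δ) : Prop := ∀ y, y ∈ s ↔ ∃ u, VSubset u t ∧ VPairMem g u y

/-- `s` is the section at `a` of some member of `F`. -/
def VSection (F s a : Vrank δ) : Prop := ∃ p, p ∈ F ∧ ∀ z, z ∈ s ↔ VPairMem p a z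

/-- `F` codes a function `f` from the nonempty subsets of `W` to `W`, by `f s = a` when
`{a} × s ∈ F`, such that for every `g ⊆ W` for which the map `t ↦ ⋃ {g[u] | u ⊆ t}` is injective
on the power set of `W`, the function `f` takes every value `a ∈ W` on the image of that map. -/
def VGood (W F : Vrank δ) : Prop :=
  (∀ s, VSubset s W → (∃ z, z ∈ s) → ∃ a, a ∈ W ∧ VSection F s a) ∧
  (∀ s, VSubset s W → (∃ z, z ∈ s) → ∀ a b, VSection F s a → VSection F s b → a = b) ∧
  ∀ g, VSubset g W →
    (∀ t t' s, VSubset t W → VSubset t' W → VImage g t s → VImage g t' s → t = t') →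
    ∀ a, a ∈ W → ∃ t s, VSubset t W ∧ (∃ z, z ∈ s) ∧ VImage g t s ∧ VSection F s a

namespace Dfn

theorem sub (i k : ℕ) : Dfn (δ := δ) (fun v => VSubset (v i) (v k)) :=
  all (imp (mem _ _) (mem _ _))

theorem ord (i : ℕ) : Dfn (δ := δ) (fun v => VOrd (v i)) :=
  and (all (imp (mem _ _) (sub _ _))) (all (imp (mem _ _) (all (imp (mem _ _) (sub _ _)))))

theorem height (i k : ℕ) : Dfn (δ := δ) (fun v => VHeight (v i) (v k)) :=
  all (iff (mem _ _) (and (mem _ _) (ord _)))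

theorem level (i : ℕ) : Dfn (δ := δ) (fun v => VLevel (v i)) :=
  ex (and (all (imp (mem _ _) (all (iff (mem _ _) (ex (and (mem _ _) (and (mem _ _) (sub _ _))))))))
    (all (iff (mem _ _) (ex (and (mem _ _) (sub _ _))))))

theorem noLimit (i k : ℕ) : Dfn (δ := δ) (fun v => VNoLimit (v i) (v k)) :=
  all (imp (mem _ _) (imp (ex (and (mem _ _) (mem _ _))) (ex (and (mem _ _) (and (mem _ _)
    (all (imp (mem _ _) (imp (mem _ _) (or (mem _ _) (eq _ _))))))))))

theorem pair (i k l : ℕ) : Dfn (δ := δ) (fun v => VPair (v i) (v k) (v l)) :=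
  have h₁ (a b : ℕ) : Dfn (δ := δ) (fun v => ∀ w, w ∈ v a ↔ w = v b) :=
    all (iff (mem _ _) (eq _ _))
  have h₂ (a b c : ℕ) : Dfn (δ := δ) (fun v => ∀ w, w ∈ v a ↔ w = v b ∨ w = v c) :=
    all (iff (mem _ _) (or (eq _ _) (eq _ _)))
  and (ex (and (mem _ _) (h₁ _ _))) (and (ex (and (mem _ _) (h₂ _ _ _)))
    (all (imp (mem _ _) (or (h₁ _ _) (h₂ _ _ _)))))

theorem pairMem (i k l : ℕ) : Dfn (δ := δ) (fun v => VPairMem (v i) (v k) (v l)) :=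
  ex (and (mem _ _) (pair _ _ _))

theorem image (i k l : ℕ) : Dfn (δ := δ) (fun v => VImage (v i) (v k) (v l)) :=
  all (iff (mem _ _) (ex (and (sub _ _) (pairMem _ _ _))))

theorem section_ (i k l : ℕ) : Dfn (δ := δ) (fun v => VSection (v i) (v k) (v l)) :=
  ex (and (mem _ _) (all (iff (mem _ _) (pairMem _ _ _))))

theorem good (i k : ℕ) : Dfn (δ := δ) (fun v => VGood (v i) (v k)) :=
  and (all (imp (sub _ _) (imp (ex (mem _ _)) (ex (and (mem _ _) (section_ _ _ _))))))
    (and (all (imp (sub _ _) (imp (ex (mem _ _)) (all (all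
        (imp (section_ _ _ _) (imp (section_ _ _ _) (eq _ _))))))))
      (all (imp (sub _ _) (imp
        (all (all (all (imp (sub _ _) (imp (sub _ _) (imp (image _ _ _)
          (imp (image _ _ _) (eq _ _))))))))
        (all (imp (mem _ _) (ex (ex (and (sub _ _) (and (ex (mem _ _))
          (and (image _ _ _) (section_ _ _ _))))))))))))

end Dfn

/-! ### Absoluteness -/

theorem rank_lt_of_mem_val {x : Vrank δ} {z : ZFSet} (h : z ∈ x.val) : z.rank < δ :=
  (ZFSet.rank_lt_of_mem h).trans x.2

theorem Vrank.ext {x y : Vrank δ} (h : ∀ z, z ∈ x ↔ z ∈ y) : x = y :=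
  Subtype.ext (ZFSet.ext fun z =>
    ⟨fun hz => (h ⟨z, rank_lt_of_mem_val hz⟩).1 hz, fun hz => (h ⟨z, rank_lt_of_mem_val hz⟩).2 hz⟩)

theorem Vrank.val_inj {x y : Vrank δ} : x.val = y.val ↔ x = y :=
  ⟨fun h => Subtype.ext h, fun h => h ▸ rfl⟩

theorem vsub_iff {x y : Vrank δ} : VSubset x y ↔ x.val ⊆ y.val :=
  ⟨fun h z hz => h ⟨z, rank_lt_of_mem_val hz⟩ hz, fun h _ hz => h hz⟩

theorem vord_iff {x : Vrank δ} : VOrd x ↔ x.val.IsOrdinal := by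
  rw [ZFSet.isOrdinal_iff_forall_mem_isTransitive]
  constructor
  · rintro ⟨h₁, h₂⟩
    refine ⟨fun y hy => vsub_iff.1 (h₁ ⟨y, rank_lt_of_mem_val hy⟩ hy), fun y hy z hz => ?_⟩
    have hy' := rank_lt_of_mem_val hy
    have hz' := (ZFSet.rank_lt_of_mem hz).trans hy'
    exact vsub_iff.1 (h₂ ⟨y, hy'⟩ hy ⟨z, hz'⟩ hz)
  · rintro ⟨h₁, h₂⟩
    exact ⟨fun y hy => vsub_iff.2 (h₁ _ hy), fun y hy z hz => vsub_iff.2 (h₂ _ hy _ hz)⟩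

theorem vpair_iff {p a b : Vrank δ} : VPair p a b ↔ p.val = ZFSet.pair a.val b.val := by
  have h₁ (z a : Vrank δ) : (∀ w, w ∈ z ↔ w = a) ↔ z.val = {a.val} := by
    constructor
    · intro h
      ext w
      rw [ZFSet.mem_singleton]
      exact ⟨fun hw => congrArg Subtype.val ((h ⟨w, rank_lt_of_mem_val hw⟩).1 hw),
        fun hw => hw ▸ (h a).2 rfl⟩
    · intro h w
      change w.val ∈ z.val ↔ _
      rw [h, ZFSet.mem_singleton, Vrank.val_inj]
  have h₂ (z a b : Vrank δ) : (∀ w, w ∈ z ↔ w = a ∨ w = b) ↔ z.val = {a.val, b.val} := by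
    constructor
    · intro h
      ext w
      rw [ZFSet.mem_pair]
      constructor
      · intro hw
        exact ((h ⟨w, rank_lt_of_mem_val hw⟩).1 hw).imp (congrArg Subtype.val)
          (congrArg Subtype.val)
      · rintro (rfl | rfl)
        exacts [(h a).2 (Or.inl rfl), (h b).2 (Or.inr rfl)]
    · intro h w
      change w.val ∈ z.val ↔ _
      rw [h, ZFSet.mem_pair, Vrank.val_inj, Vrank.val_inj]
  simp only [VPair, h₁, h₂]
  constructor
  · rintro ⟨⟨y, hy, hya⟩, ⟨z, hz, hzb⟩, h⟩
    ext w
    rw [ZFSet.pair, ZFSet.mem_pair]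
    constructor
    · intro hw
      exact h ⟨w, rank_lt_of_mem_val hw⟩ hw
    · rintro (rfl | rfl)
      exacts [hya ▸ hy, hzb ▸ hz]
  · intro h
    have ha : ({a.val} : ZFSet) ∈ p.val := by simp [h, ZFSet.pair]
    have hb : ({a.val, b.val} : ZFSet) ∈ p.val := by simp [h, ZFSet.pair]
    refine ⟨⟨⟨_, rank_lt_of_mem_val ha⟩, ha, rfl⟩, ⟨⟨_, rank_lt_of_mem_val hb⟩, hb, rfl⟩, ?_⟩
    intro z hz
    change z.val ∈ p.val at hz
    rwa [h, ZFSet.pair, ZFSet.mem_pair] at hz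

theorem vpairMem_iff {g a b : Vrank δ} : VPairMem g a b ↔ ZFSet.pair a.val b.val ∈ g.val := by
  constructor
  · rintro ⟨p, hp, h⟩
    rw [← vpair_iff.1 h]
    exact hp
  · intro h
    exact ⟨⟨_, rank_lt_of_mem_val h⟩, h, vpair_iff.2 rfl⟩

open ZFSet in
/-- The witness in `VLevel` consists of stages, by `∈`-induction, so `W` is a stage as well. -/
theorem level_eq {W : Vrank δ} (hW : VLevel W) : W.val = V_ W.val.rank := by
  obtain ⟨h, hh, hW⟩ := hW
  -- A union of power sets of stages is itself a stage.
  have key (v : Vrank δ) (P : Vrank δ → Prop) (hP : ∀ u, P u → u.val = V_ u.val.rank)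
      (hv : ∀ x, x ∈ v ↔ ∃ u, P u ∧ VSubset x u) : v.val = V_ v.val.rank := by
    ext x
    rw [mem_vonNeumann]
    refine ⟨rank_lt_of_mem, fun hx => ?_⟩
    obtain ⟨y, hy, hxy⟩ := lt_rank_iff.1 hx
    obtain ⟨u, hu, hyu⟩ := (hv ⟨y, rank_lt_of_mem_val hy⟩).1 hy
    refine (hv ⟨x, hx.trans v.2⟩).2 ⟨u, hu, vsub_iff.2 ?_⟩
    rw [hP u hu, subset_vonNeumann]
    exact hxy.trans (rank_mono (vsub_iff.1 hyu))
  have hlev : ∀ (z : ZFSet) (v : Vrank δ), v.val = z → v ∈ h → v.val = V_ v.val.rank := by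
    intro z
    induction z using ZFSet.inductionOn with
    | _ z ih =>
      rintro v rfl hv
      refine key v (fun u => u ∈ h ∧ u ∈ v) (fun u hu => ih u.val hu.2 u rfl hu.1) fun x => ?_
      simpa only [and_assoc] using hh v hv x
  exact key W (· ∈ h) (fun u hu => hlev u.val u rfl hu) hW

open ZFSet in
theorem level_vonNeumann {α : Ordinal} (hα : (V_ α).rank < δ) :
    VLevel (⟨V_ α, hα⟩ : Vrank δ) := by
  have hr : ((V_ α).sep fun z => ∃ β, z = V_ β).rank < δ :=
    (rank_mono sep_subset).trans_lt hα
  rw [rank_vonNeumann] at hα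
  have hmem (β : Ordinal) (x : Vrank δ) (hβ : β ≤ α) :
      x.val ∈ V_ β ↔ ∃ γ < β, x.val ⊆ V_ γ := mem_vonNeumann'
  obtain ⟨H, hHv⟩ : ∃ H : Vrank δ, H.val = (V_ α).sep fun z => ∃ β, z = V_ β := ⟨⟨_, hr⟩, rfl⟩
  have hH (z : Vrank δ) : z ∈ H ↔ z.val ∈ V_ α ∧ ∃ β, z.val = V_ β := by
    change z.val ∈ H.val ↔ _
    rw [hHv]
    exact mem_sep
  refine ⟨H, ?_, fun x => ?_⟩
  · intro v hv x
    obtain ⟨hvα, β, hβ⟩ := (hH _).1 hv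
    have hβα : β < α := by rwa [hβ, vonNeumann_mem_vonNeumann_iff] at hvα
    change x.val ∈ v.val ↔ _
    rw [hβ, hmem β x hβα.le]
    constructor
    · rintro ⟨γ, hγ, hx⟩
      refine ⟨⟨V_ γ, by rw [rank_vonNeumann]; exact (hγ.trans hβα).trans hα⟩,
        (hH _).2 ⟨vonNeumann_mem_vonNeumann_iff.2 (hγ.trans hβα), γ, rfl⟩, ?_, vsub_iff.2 hx⟩
      change V_ γ ∈ v.val
      rw [hβ]
      exact vonNeumann_mem_vonNeumann_iff.2 hγ
    · rintro ⟨u, hu, huv, hx⟩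
      obtain ⟨-, γ, hγ⟩ := (hH _).1 hu
      refine ⟨γ, ?_, hγ ▸ vsub_iff.1 hx⟩
      change u.val ∈ v.val at huv
      rwa [hβ, hγ, vonNeumann_mem_vonNeumann_iff] at huv
  · change x.val ∈ V_ α ↔ _
    rw [hmem α x le_rfl]
    constructor
    · rintro ⟨γ, hγ, hx⟩
      refine ⟨⟨V_ γ, by rw [rank_vonNeumann]; exact hγ.trans hα⟩,
        (hH _).2 ⟨vonNeumann_mem_vonNeumann_iff.2 hγ, γ, rfl⟩, vsub_iff.2 hx⟩
    · rintro ⟨u, hu, hx⟩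
      obtain ⟨huα, γ, hγ⟩ := (hH _).1 hu
      exact ⟨γ, by rwa [hγ, vonNeumann_mem_vonNeumann_iff] at huα, hγ ▸ vsub_iff.1 hx⟩

end Notions

/-! ### Elementary embeddings and the critical sequence -/

section Embedding

variable {δ : Ordinal} (j : Vrank δ ↪ₑ[setLanguage] Vrank δ)

theorem exists_val {z : ZFSet} (h : z.rank < δ) : ∃ x : Vrank δ, x.val = z := ⟨⟨z, h⟩, rfl⟩

/-- The assignment taking the values `x, y, z, z, …`. -/
def tuple (x y z : Vrank δ) : ℕ → Vrank δ
  | 0 => x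
  | 1 => y
  | _ => z

theorem emb_mem {x y : Vrank δ} : j x ∈ j y ↔ x ∈ y :=
  (Dfn.mem 0 1).preserved j (tuple x y y)

theorem emb_sub {x y : Vrank δ} : VSubset (j x) (j y) ↔ VSubset x y :=
  (Dfn.sub 0 1).preserved j (tuple x y y)

theorem emb_ord {x : Vrank δ} : (j x).val.IsOrdinal ↔ x.val.IsOrdinal := by
  rw [← vord_iff, ← vord_iff]
  exact (Dfn.ord 0).preserved j (tuple x x x)

theorem emb_height {x y : Vrank δ} : VHeight (j x) (j y) ↔ VHeight x y :=
  (Dfn.height 0 1).preserved j (tuple x y y)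

theorem emb_level {x : Vrank δ} : VLevel (j x) ↔ VLevel x :=
  (Dfn.level 0).preserved j (tuple x x x)

theorem emb_noLimit {x y : Vrank δ} : VNoLimit (j x) (j y) ↔ VNoLimit x y :=
  (Dfn.noLimit 0 1).preserved j (tuple x y y)

theorem emb_section {x y z : Vrank δ} : VSection (j x) (j y) (j z) ↔ VSection x y z :=
  (Dfn.section_ 0 1 2).preserved j (tuple x y z)

theorem emb_good {x y : Vrank δ} : VGood (j x) (j y) ↔ VGood x y :=
  (Dfn.good 0 1).preserved j (tuple x y y)

theorem mem_toZFSet_iff_rank {x : ZFSet} {α : Ordinal} :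
    x ∈ α.toZFSet ↔ x.rank < α ∧ x.IsOrdinal := by
  rw [Ordinal.mem_toZFSet_iff]
  constructor
  · rintro ⟨β, hβ, rfl⟩
    exact ⟨by rwa [Ordinal.rank_toZFSet], ZFSet.isOrdinal_toZFSet β⟩
  · rintro ⟨h, hx⟩
    exact ⟨_, h, hx.toZFSet_rank_eq⟩

theorem mem_toZFSet_iff_mem_vonNeumann {x : ZFSet} {α : Ordinal} :
    x ∈ α.toZFSet ↔ x ∈ ZFSet.vonNeumann α ∧ x.IsOrdinal := by
  rw [mem_toZFSet_iff_rank, ZFSet.mem_vonNeumann]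

/-- An elementary embedding takes the stage of height `α` to the stage of height `j α`. -/
theorem emb_vonNeumann {o W : Vrank δ} (ho : o.val.IsOrdinal)
    (hW : W.val = ZFSet.vonNeumann o.val.rank) :
    (j W).val = ZFSet.vonNeumann (j o).val.rank := by
  have hl : VLevel W := by
    have hr : (ZFSet.vonNeumann o.val.rank).rank < δ := hW ▸ W.2
    obtain rfl : W = ⟨_, hr⟩ := Subtype.ext hW
    exact level_vonNeumann hr
  have hh : VHeight o W := fun x => by
    change x.val ∈ o.val ↔ x.val ∈ W.val ∧ _
    rw [vord_iff, hW, ← mem_toZFSet_iff_mem_vonNeumann, ho.toZFSet_rank_eq]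
  have hl' := level_eq ((emb_level j).2 hl)
  have hh' := (emb_height j).2 hh
  have : (j o).val = (j W).val.rank.toZFSet := by
    ext x
    rw [mem_toZFSet_iff_mem_vonNeumann, ← hl']
    constructor
    · intro hx
      have := (hh' ⟨x, rank_lt_of_mem_val hx⟩).1 hx
      exact ⟨this.1, vord_iff.1 this.2⟩
    · rintro ⟨hx, hx'⟩
      exact (hh' ⟨x, rank_lt_of_mem_val hx⟩).2 ⟨hx, vord_iff.2 hx'⟩
  rw [this, Ordinal.rank_toZFSet, ← hl']

/-- An elementary embedding fixing every ordinal is the identity: a set `x` of minimal rank moved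
by `j` would satisfy `j x ⊆ j V_α = V_α` for `α = rank x`, and `j` fixes `V_α` pointwise. -/
theorem eq_id_of_fixes_ordinals (h : ∀ x : Vrank δ, x.val.IsOrdinal → j x = x) : ⇑j = id := by
  have key : ∀ (α : Ordinal) (x : Vrank δ), x.val.rank = α → j x = x := by
    intro α
    induction α using WellFoundedLT.induction with
    | _ α ih =>
      rintro x rfl
      obtain ⟨o, ho⟩ : ∃ o : Vrank δ, o.val = x.val.rank.toZFSet :=
        exists_val ((Ordinal.rank_toZFSet _).trans_lt x.2)
      obtain ⟨W, hW⟩ : ∃ W : Vrank δ, W.val = ZFSet.vonNeumann x.val.rank :=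
        exists_val ((ZFSet.rank_vonNeumann _).trans_lt x.2)
      have ho' : o.val.IsOrdinal := ho ▸ ZFSet.isOrdinal_toZFSet _
      have hro : o.val.rank = x.val.rank := by rw [ho, Ordinal.rank_toZFSet]
      have hjW := emb_vonNeumann j ho' (hW.trans (by rw [hro]))
      rw [h o ho', hro] at hjW
      have hsub : VSubset (j x) (j W) := (emb_sub j).2 (vsub_iff.2 (by
        rw [hW]; exact ZFSet.subset_vonNeumann_self _))
      rw [vsub_iff, hjW] at hsub
      refine Vrank.ext fun z => ⟨fun hz => ?_, fun hz => ?_⟩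
      · have := ih _ (ZFSet.mem_vonNeumann.1 (hsub hz)) z rfl
        rwa [← this, emb_mem] at hz
      · have hr : z.val.rank < x.val.rank := ZFSet.rank_lt_of_mem hz
        rwa [← emb_mem j, ih _ hr z rfl] at hz
  exact funext fun x => key _ x rfl

variable {j} {c₀ : Vrank δ}

/-- `c₀` is the critical point of `j`: the least von Neumann ordinal moved by `j`. -/
structure IsCrit (j : Vrank δ ↪ₑ[setLanguage] Vrank δ) (c₀ : Vrank δ) : Prop where
  ord : c₀.val.IsOrdinal
  moved : j c₀ ≠ c₀
  fixed : ∀ x, x ∈ c₀ → j x = x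

namespace IsCrit

theorem lt (h : IsCrit j c₀) : c₀ ∈ j c₀ := by
  rcases h.ord.mem_trichotomous ((emb_ord j).2 h.ord) with h' | h' | h'
  · exact h'
  · exact absurd (Subtype.ext h'.symm) h.moved
  · exact absurd (j.injective (h.fixed _ h')) h.moved

theorem notMem_range (h : IsCrit j c₀) (x : Vrank δ) : j x ≠ c₀ := by
  intro hx
  have hxo : x.val.IsOrdinal := (emb_ord j).1 (hx ▸ h.ord)
  rcases h.ord.mem_trichotomous hxo with h' | h' | h'
  · have : j c₀ ∈ j x := (emb_mem j).2 h'
    rw [hx] at this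
    exact ZFSet.mem_asymm h.lt this
  · obtain rfl : c₀ = x := Subtype.ext h'
    exact h.moved hx
  · have := h.fixed x h'
    rw [this] at hx
    rw [hx] at h'
    exact ZFSet.mem_irrefl _ h'

theorem iterate_ord (h : IsCrit j c₀) (n : ℕ) : ((⇑j)^[n] c₀).val.IsOrdinal := by
  induction n with
  | zero => exact h.ord
  | succ n ih => rw [Function.iterate_succ_apply']; exact (emb_ord j).2 ih

theorem iterate_mem (h : IsCrit j c₀) (n : ℕ) : (⇑j)^[n] c₀ ∈ (⇑j)^[n + 1] c₀ := by
  induction n with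
  | zero => exact h.lt
  | succ n ih =>
    have := (emb_mem j).2 ih
    rwa [← Function.iterate_succ_apply' j, ← Function.iterate_succ_apply' j] at this

theorem strictMono (h : IsCrit j c₀) : StrictMono fun n => ((⇑j)^[n] c₀).val.rank :=
  strictMono_nat_of_lt_succ fun n => ZFSet.rank_lt_of_mem (h.iterate_mem n)

end IsCrit

end Embedding

/-! ### A function taking every value on many images of a power set -/

section Combinatorics

universe u

open Cardinal

/-- Sets `A i` of cardinality at least that of the index type have distinct representatives, chosen
by recursion along a well-order of least type. -/
theorem exists_injective_choice {I T : Type u} (A : I → Set T) (h : ∀ i, #I ≤ #(A i)) :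
    ∃ c : I → T, Function.Injective c ∧ ∀ i, c i ∈ A i := by
  obtain ⟨r, wo, hr⟩ := exists_ord_eq I
  have hex (i : I) (prev : ∀ k, r k i → T) : ∃ x ∈ A i, ∀ k hk, prev k hk ≠ x := by
    by_contra! hcon
    choose k hk hkx using hcon
    have hle : #(A i) ≤ #{k // r k i} :=
      mk_le_of_injective (f := fun x : A i => (⟨k x.1 x.2, hk x.1 x.2⟩ : {k // r k i}))
        fun x y hxy => Subtype.ext (by
          have hxy' : k x.1 x.2 = k y.1 y.2 := congrArg Subtype.val hxy
          rw [← hkx x.1 x.2, ← hkx y.1 y.2]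
          congr)
    have hlt : #{k // r k i} < #I := card_typein_lt i hr
    exact absurd ((h i).trans hle) (not_le.2 hlt)
  have wf : WellFounded r := wo.wf
  let c : I → T := wf.fix fun i prev => (hex i prev).choose
  have hc (i : I) : c i ∈ A i ∧ ∀ k, r k i → c k ≠ c i := by
    have he : c i = (hex i fun k _ => c k).choose := wf.fix_eq _ i
    rw [he]
    exact (hex i fun k _ => c k).choose_spec
  refine ⟨c, fun i k hik => ?_, fun i => (hc i).1⟩
  rcases trichotomous_of r i k with h' | h' | h'
  · exact absurd hik ((hc k).2 i h')
  · exact h'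
  · exact absurd hik.symm ((hc i).2 k h')

/-- There are at most `|T|` requests `(g, a)`, and each can be met at `|T|` many points, because the
range of `e g` has cardinality `|T|` even without `z`. Meeting the requests at distinct points gives
`f`. -/
theorem exists_code {T G B : Type u} [Infinite T] [Nonempty B] (hB : #B ≤ #T) (hG : #G ≤ #T)
    (e : G → T → T) (he : ∀ g, Function.Injective (e g)) (z : T) :
    ∃ f : T → B, ∀ g a, ∃ t, e g t ≠ z ∧ f (e g t) = a := by
  obtain ⟨c, hc, hcA⟩ := exists_injective_choice (I := G × B)
      (fun i => e i.1 '' {t | e i.1 t = z}ᶜ) fun i => by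
    have hs : #{t | e i.1 t = z} < #T := by
      refine (mk_le_one_iff_set_subsingleton.2 fun x hx y hy => he i.1 (hx.trans hy.symm)).trans_lt ?_
      exact one_lt_aleph0.trans_le (aleph0_le_mk T)
    rw [mk_image_eq (he i.1), mk_compl_of_infinite _ hs, mk_prod, lift_id, lift_id]
    exact (mul_le_mul' hG hB).trans (mul_eq_self (aleph0_le_mk T)).le
  refine ⟨Function.extend c Prod.snd fun _ => Classical.arbitrary B, fun g a => ?_⟩
  obtain ⟨t, ht, hct⟩ := hcA (g, a)
  exact ⟨t, ht, by rw [hct, hc.extend_apply]⟩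

end Combinatorics

/-! ### Coding such a function in `V_{λ+2}` -/

section Good

open ZFSet

variable {δ : Ordinal}

theorem vsub_vonNeumann_iff {lam : Ordinal} {t W : Vrank δ} (hW : W.val = V_ lam) :
    VSubset t W ↔ t.val ⊆ V_ lam := by
  rw [vsub_iff, hW]

theorem pair_mem_vonNeumann {lam : Ordinal} (hlim : ∀ a < lam, a + 1 < lam) {a b : ZFSet}
    (ha : a ∈ V_ lam) (hb : b ∈ V_ lam) : pair a b ∈ V_ lam := by
  rw [mem_vonNeumann] at ha hb ⊢
  simp only [ZFSet.pair, rank_pair, rank_singleton, max_lt_iff, Order.succ_eq_add_one]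
  have ha' := hlim _ ha
  have hb' := hlim _ hb
  refine ⟨hlim _ ha', hlim _ (max_lt ha' hb')⟩

theorem rank_lt_rank_pair (a b : ZFSet) : b.rank < (pair a b).rank :=
  (rank_lt_of_mem (y := b) (x := {a, b}) (by simp)).trans
    (rank_lt_of_mem (by simp [ZFSet.pair]))

/-- The map `t ↦ ⋃ {g[u] | u ⊆ t}` on subsets of `V_λ`, with values cut down to `V_λ`. -/
noncomputable def coverImage (lam : Ordinal) (g t : {t : ZFSet // t ⊆ V_ lam}) : {t : ZFSet // t ⊆ V_ lam} :=
  ⟨(V_ lam).sep fun y => ∃ u ⊆ t.1, pair u y ∈ g.1, sep_subset⟩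

theorem vimage_iff {lam : Ordinal} {g t s : Vrank δ} (hg : g.val ⊆ V_ lam) (ht : t.val ⊆ V_ lam) :
    VImage g t s ↔ s.val = (coverImage lam ⟨g.val, hg⟩ ⟨t.val, ht⟩).1 := by
  have hmem (y : ZFSet) : y ∈ (coverImage lam ⟨g.val, hg⟩ ⟨t.val, ht⟩).1 ↔
      ∃ u ⊆ t.val, pair u y ∈ g.val := by
    rw [coverImage, mem_sep]
    refine ⟨And.right, fun h => ⟨?_, h⟩⟩
    obtain ⟨u, -, hu⟩ := h
    exact mem_vonNeumann.2 ((rank_lt_rank_pair u y).trans (mem_vonNeumann.1 (hg hu)))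
  have hex (y : Vrank δ) : (∃ u, VSubset u t ∧ VPairMem g u y) ↔
      ∃ u ⊆ t.val, pair u y.val ∈ g.val := by
    constructor
    · rintro ⟨u, hu, hp⟩
      exact ⟨u.val, vsub_iff.1 hu, vpairMem_iff.1 hp⟩
    · rintro ⟨u, hu, hp⟩
      obtain ⟨u, rfl⟩ := exists_val ((rank_mono hu).trans_lt t.2)
      exact ⟨u, vsub_iff.2 hu, vpairMem_iff.2 hp⟩
  simp only [VImage, hex]
  constructor
  · intro h
    ext y
    rw [hmem]
    constructor
    · intro hy
      exact (h ⟨y, rank_lt_of_mem_val hy⟩).1 hy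
    · rintro ⟨u, hu, hp⟩
      have hy : y.rank < δ := (rank_lt_rank_pair u y).trans (rank_lt_of_mem_val hp)
      exact (h ⟨y, hy⟩).2 ⟨u, hu, hp⟩
  · intro h y
    rw [← hmem, ← h]
    rfl

open Cardinal in
/-- The family `F` is obtained from a function on the subsets of `V_λ` that takes each value on each
of the (at most `2 ^ |V_λ|` many) images in question. -/
theorem exists_good {lam : Ordinal} (hpos : 0 < lam) (hlim : ∀ a < lam, a + 1 < lam)
    (hδ : lam + 1 < δ) {W : Vrank δ} (hW : W.val = V_ lam) : ∃ F : Vrank δ, VGood W F := by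
  have hδ' : lam < δ := (lt_add_one lam).trans hδ
  have hrank {t : ZFSet} (ht : t ⊆ V_ lam) : t.rank < δ :=
    (subset_vonNeumann.1 ht).trans_lt hδ'
  have hsubset {a : ZFSet} (ha : a ∈ V_ lam) : a ⊆ V_ lam :=
    (isTransitive_vonNeumann lam).subset_of_mem ha
  have hnat (n : ℕ) : (n : Ordinal) < lam := by
    induction n with
    | zero => simpa using hpos
    | succ n ih => simpa using hlim _ ih
  have : Infinite {t : ZFSet // t ⊆ V_ lam} :=
    Infinite.of_injective
      (fun n : ℕ => (⟨V_ n, vonNeumann_subset_of_le (hnat n).le⟩ : {t : ZFSet // t ⊆ V_ lam}))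
      fun m n h => by
        have := congrArg Subtype.val h
        simpa using this
  have : Nonempty {a : ZFSet // a ∈ V_ lam} :=
    ⟨⟨V_ 0, vonNeumann_mem_vonNeumann_iff.2 hpos⟩⟩
  obtain ⟨f, hf⟩ := exists_code (T := {t : ZFSet // t ⊆ V_ lam}) (B := {a : ZFSet // a ∈ V_ lam})
    (G := {g : {t : ZFSet // t ⊆ V_ lam} // Function.Injective (coverImage lam g)})
    (mk_le_of_injective (f := fun a => ⟨a.1, hsubset a.2⟩) fun a b h =>
      Subtype.ext (Subtype.mk.inj h))
    (mk_subtype_le _) (fun g => coverImage lam g.1) (fun g => g.2) ⟨∅, empty_subset _⟩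
  obtain ⟨F, hF⟩ : ∃ F : Vrank δ, F.val = (powerset (V_ lam)).sep fun p =>
      ∃ s : {t : ZFSet // t ⊆ V_ lam}, (∃ z, z ∈ s.1) ∧ p = prod {(f s).1} s.1 :=
    exists_val ((rank_mono sep_subset).trans_lt (by
      rwa [rank_powerset, rank_vonNeumann, Order.succ_eq_add_one]))
  have hsec (s a : Vrank δ) (hs : s.val ⊆ V_ lam) (hne : ∃ z, z ∈ s) :
      VSection F s a ↔ a.val = (f ⟨s.val, hs⟩).1 := by
    constructor
    · rintro ⟨p, hp, h⟩
      change p.val ∈ F.val at hp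
      rw [hF, mem_sep] at hp
      obtain ⟨-, s', -, hp⟩ := hp
      simp only [vpairMem_iff, hp, pair_mem_prod, mem_singleton] at h
      obtain ⟨z, hz⟩ := hne
      have ha := ((h z).1 hz).1
      have hss : s.val = s'.1 := by
        ext y
        constructor
        · intro hy
          exact ((h ⟨y, rank_lt_of_mem_val hy⟩).1 hy).2
        · intro hy
          exact (h ⟨y, (rank_lt_of_mem hy).trans (hrank s'.2)⟩).2 ⟨ha, hy⟩
      rw [ha]
      congr 2
      exact Subtype.ext hss.symm
    · intro ha
      have hpW : prod {a.val} s.val ⊆ V_ lam := by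
        intro q hq
        obtain ⟨x, hx, y, hy, rfl⟩ := mem_prod.1 hq
        rw [mem_singleton.1 hx, ha]
        exact pair_mem_vonNeumann hlim (f _).2 (hs hy)
      obtain ⟨p, hp⟩ : ∃ p : Vrank δ, p.val = prod {a.val} s.val := exists_val (hrank hpW)
      refine ⟨p, ?_, fun z => ?_⟩
      · change p.val ∈ F.val
        rw [hF, mem_sep, mem_powerset, hp]
        obtain ⟨z, hz⟩ := hne
        exact ⟨hpW, ⟨s.val, hs⟩, ⟨z.val, hz⟩, by rw [ha]⟩
      · rw [vpairMem_iff, hp, pair_mem_prod, mem_singleton]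
        exact ⟨fun h => ⟨rfl, h⟩, And.right⟩
  refine ⟨F, ?_, ?_, ?_⟩
  · intro s hs hne
    rw [vsub_vonNeumann_iff hW] at hs
    obtain ⟨a, ha⟩ : ∃ a : Vrank δ, a.val = (f ⟨s.val, hs⟩).1 :=
      exists_val (hrank (hsubset (f _).2))
    refine ⟨a, ?_, (hsec s a hs hne).2 ha⟩
    change a.val ∈ W.val
    rw [ha, hW]
    exact (f _).2
  · intro s hs hne a b ha hb
    rw [vsub_vonNeumann_iff hW] at hs
    exact Vrank.val_inj.1 (((hsec s a hs hne).1 ha).trans ((hsec s b hs hne).1 hb).symm)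
  · intro g hg hinj a ha
    rw [vsub_vonNeumann_iff hW] at hg
    change a.val ∈ W.val at ha
    rw [hW] at ha
    have hinj' : Function.Injective (coverImage lam ⟨g.val, hg⟩) := by
      rintro ⟨t, ht⟩ ⟨t', ht'⟩ htt
      obtain ⟨t, rfl⟩ := exists_val (hrank ht)
      obtain ⟨t', rfl⟩ := exists_val (hrank ht')
      obtain ⟨s, hs⟩ := exists_val (hrank (coverImage lam ⟨g.val, hg⟩ ⟨t.val, ht⟩).2)
      refine Subtype.ext (Vrank.val_inj.2 (hinj t t' s ((vsub_vonNeumann_iff hW).2 ht)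
        ((vsub_vonNeumann_iff hW).2 ht') ((vimage_iff hg ht).2 hs) ((vimage_iff hg ht').2 ?_)))
      rw [hs, htt]
    obtain ⟨⟨t, ht⟩, hne, hft⟩ := hf ⟨⟨g.val, hg⟩, hinj'⟩ ⟨a.val, ha⟩
    obtain ⟨t, rfl⟩ := exists_val (hrank ht)
    obtain ⟨s, hs⟩ := exists_val (hrank (coverImage lam ⟨g.val, hg⟩ ⟨t.val, ht⟩).2)
    have hsW : s.val ⊆ V_ lam := hs ▸ (coverImage lam ⟨g.val, hg⟩ ⟨t.val, ht⟩).2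
    have hsne : ∃ z, z ∈ s := by
      obtain ⟨z, hz⟩ : ∃ z, z ∈ s.val := by
        exact (eq_empty_or_nonempty s.val).resolve_left fun h => hne (Subtype.ext (hs.symm.trans h))
      exact ⟨⟨z, rank_lt_of_mem_val hz⟩, hz⟩
    refine ⟨t, s, (vsub_vonNeumann_iff hW).2 ht, hsne, (vimage_iff hg ht).2 hs,
      (hsec s a hsW hsne).2 ?_⟩
    have : (⟨s.val, hsW⟩ : {t : ZFSet // t ⊆ V_ lam}) = coverImage lam ⟨g.val, hg⟩ ⟨t.val, ht⟩ :=
      Subtype.ext hs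
    rw [this, hft]

end Good

/-! ### The contradiction -/

section Contradiction

open ZFSet

variable {δ : Ordinal} {j : Vrank δ ↪ₑ[setLanguage] Vrank δ}

theorem emb_inter {x y z : Vrank δ} (h : ∀ w, w ∈ x ↔ w ∈ y ∧ w ∈ z) (w : Vrank δ) :
    w ∈ j x ↔ w ∈ j y ∧ w ∈ j z :=
  ((Dfn.all (Dfn.iff (Dfn.mem 0 1) (Dfn.and (Dfn.mem 0 2) (Dfn.mem 0 3)))).preserved
    (R := fun v => ∀ w, w ∈ v 0 ↔ w ∈ v 1 ∧ w ∈ v 2) j (tuple x y z)).2 h w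

/-- If `j` fixes `W = V_λ` and is cofinal in it, then every element of `W` is a value of `j`. The
trace of `j` on the subsets of `W` is coded by the relation `y ∈ j u` on `W`. -/
theorem exists_preimage {lam : Ordinal} (hpos : 0 < lam) (hlim : ∀ a < lam, a + 1 < lam)
    (hδ : lam + 1 < δ) {W : Vrank δ} (hW : W.val = V_ lam) (hjW : j W = W)
    (hcof : ∀ y, y ∈ W → ∃ u, u ∈ W ∧ y ∈ j u) {a : Vrank δ} (ha : a ∈ W) : ∃ x, j x = a := by
  obtain ⟨F, hF⟩ := exists_good hpos hlim hδ hW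
  have hδ' : lam < δ := (lt_add_one lam).trans hδ
  have hWmem (x : Vrank δ) : x ∈ W ↔ x.val ∈ V_ lam := by rw [← hW]; rfl
  have hjF : VGood W (j F) := by
    have := (emb_good j).2 hF
    rwa [hjW] at this
  obtain ⟨g, hg⟩ : ∃ g : Vrank δ, g.val = (V_ lam).sep fun p =>
      ∃ u y : Vrank δ, u ∈ W ∧ y ∈ W ∧ y ∈ j u ∧ p = pair u.val y.val :=
    exists_val ((rank_mono sep_subset).trans_lt (by rwa [rank_vonNeumann]))
  have hgW : VSubset g W := (vsub_vonNeumann_iff hW).2 (hg ▸ sep_subset)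
  have hgmem (u y : Vrank δ) : VPairMem g u y ↔ u ∈ W ∧ y ∈ W ∧ y ∈ j u := by
    rw [vpairMem_iff, hg, mem_sep]
    constructor
    · rintro ⟨-, u', y', hu, hy, hyu, h⟩
      obtain ⟨h₁, h₂⟩ := pair_inj.1 h
      obtain rfl := Vrank.val_inj.1 h₁
      obtain rfl := Vrank.val_inj.1 h₂
      exact ⟨hu, hy, hyu⟩
    · rintro ⟨hu, hy, hyu⟩
      exact ⟨pair_mem_vonNeumann hlim ((hWmem u).1 hu) ((hWmem y).1 hy), u, y, hu, hy, hyu, rfl⟩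
  have himg (t s : Vrank δ) (ht : VSubset t W) : VImage g t s ↔ s = j t := by
    have hjt : ∀ y, y ∈ j t ↔ ∃ u, VSubset u t ∧ VPairMem g u y := by
      intro y
      constructor
      · intro hy
        have hyW : y ∈ W := by
          have := (emb_sub j).2 ht
          rw [hjW] at this
          exact this y hy
        obtain ⟨u₀, hu₀, hyu₀⟩ := hcof y hyW
        obtain ⟨u, hu⟩ : ∃ u : Vrank δ, u.val = t.val ∩ u₀.val :=
          exists_val ((rank_mono fun z hz => (mem_inter.1 hz).1).trans_lt t.2)
        have hu' : ∀ w, w ∈ u ↔ w ∈ t ∧ w ∈ u₀ := fun w => by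
          change w.val ∈ u.val ↔ _
          rw [hu, mem_inter]
          rfl
        have huW : u ∈ W := by
          rw [hWmem] at hu₀ ⊢
          refine mem_vonNeumann_of_subset (fun z hz => ?_) hu₀
          rw [hu] at hz
          exact (mem_inter.1 hz).2
        exact ⟨u, fun w hw => ((hu' w).1 hw).1,
          (hgmem u y).2 ⟨huW, hyW, (emb_inter hu' y).2 ⟨hy, hyu₀⟩⟩⟩
      · rintro ⟨u, hut, hp⟩
        exact (emb_sub j).2 hut y ((hgmem u y).1 hp).2.2
    constructor
    · intro h
      exact Vrank.ext fun y => (h y).trans (hjt y).symm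
    · rintro rfl
      exact hjt
  -- The image of the power set of `W` under `j` meets the fibre of `j F` over `a`.
  obtain ⟨t, s, ht, ⟨z, hz⟩, hs, hsec⟩ := hjF.2.2 g hgW (fun t t' s ht ht' hs hs' =>
    j.injective (((himg t s ht).1 hs).symm.trans ((himg t' s ht').1 hs'))) a ha
  obtain rfl := (himg t s ht).1 hs
  have htne : ∃ z, z ∈ t :=
    ((Dfn.ex (Dfn.mem 0 1)).preserved (R := fun v => ∃ z, z ∈ v 0) j (tuple t t t)).1 ⟨z, hz⟩
  obtain ⟨b, -, hb⟩ := hF.1 t ht htne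
  have hjt : VSubset (j t) W := by
    have := (emb_sub j).2 ht
    rwa [hjW] at this
  exact ⟨b, hjF.2.1 (j t) hjt ⟨z, hz⟩ (j b) a ((emb_section j).2 hb) hsec⟩

end Contradiction

/-! ### The supremum of the critical sequence -/

section Supremum

open ZFSet

variable {δ : Ordinal} {j : Vrank δ ↪ₑ[setLanguage] Vrank δ} {c₀ : Vrank δ} {lam : Ordinal}

namespace IsCrit

theorem rank_lt (h : IsCrit j c₀) (hlam : lam = ⨆ n, ((⇑j)^[n] c₀).val.rank) (n : ℕ) :
    ((⇑j)^[n] c₀).val.rank < lam :=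
  (h.strictMono n.lt_succ_self).trans_le (hlam ▸
    Ordinal.le_iSup (fun n => ((⇑j)^[n] c₀).val.rank) (n + 1))

theorem exists_rank_gt (hlam : lam = ⨆ n, ((⇑j)^[n] c₀).val.rank) {a : Ordinal} (ha : a < lam) :
    ∃ n, a < ((⇑j)^[n] c₀).val.rank := by
  rwa [hlam, Ordinal.lt_iSup_iff] at ha

theorem add_one_lt (h : IsCrit j c₀) (hlam : lam = ⨆ n, ((⇑j)^[n] c₀).val.rank) (a : Ordinal)
    (ha : a < lam) : a + 1 < lam := by
  obtain ⟨n, hn⟩ := exists_rank_gt hlam ha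
  exact (Order.add_one_le_of_lt hn).trans_lt (h.rank_lt hlam n)

/-- The set of all `κₙ` has no limit point below `λ`, hence by elementarity its image has none below
`j λ`; as the image contains every `κₙ₊₁`, this excludes `λ < j λ`. -/
theorem emb_sup (h : IsCrit j c₀) (hlam : lam = ⨆ n, ((⇑j)^[n] c₀).val.rank)
    {L : Vrank δ} (hL : L.val = lam.toZFSet) : j L = L := by
  set c : ℕ → Vrank δ := fun n => (⇑j)^[n] c₀ with hc
  have hcs (n : ℕ) : j (c n) = c (n + 1) := (Function.iterate_succ_apply' j n c₀).symm
  have hco (n : ℕ) : (c n).val.IsOrdinal := h.iterate_ord n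
  have hmono : StrictMono fun n => (c n).val.rank := h.strictMono
  have hLmem (x : Vrank δ) : x ∈ L ↔ x.val.rank < lam ∧ x.val.IsOrdinal := by
    rw [← mem_toZFSet_iff_rank, ← hL]
    rfl
  have hcL (n : ℕ) : c n ∈ L := (hLmem _).2 ⟨h.rank_lt hlam n, hco n⟩
  have hLc (x : Vrank δ) (hx : x ∈ L) : ∃ n, x ∈ c n := by
    obtain ⟨hx, hxo⟩ := (hLmem x).1 hx
    obtain ⟨n, hn⟩ := exists_rank_gt hlam hx
    exact ⟨n, (hxo.rank_lt_iff_mem (hco n)).1 hn⟩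
  have hLo : L.val.IsOrdinal := hL ▸ isOrdinal_toZFSet _
  have hjLo : (j L).val.IsOrdinal := (emb_ord j).2 hLo
  obtain ⟨S, hSv⟩ : ∃ S : Vrank δ, S.val = L.val.sep fun z => ∃ n, z = (c n).val :=
    exists_val ((rank_mono sep_subset).trans_lt L.2)
  have hS (x : Vrank δ) : x ∈ S ↔ ∃ n, x = c n := by
    change x.val ∈ S.val ↔ _
    rw [hSv, mem_sep]
    constructor
    · rintro ⟨-, n, hn⟩
      exact ⟨n, Vrank.val_inj.1 hn⟩
    · rintro ⟨n, rfl⟩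
      exact ⟨hcL n, n, rfl⟩
  have hno : VNoLimit S L := by
    intro β hβ
    rintro ⟨x, hx, hxβ⟩
    obtain ⟨i, rfl⟩ := (hS x).1 hx
    have hβo := ((hLmem β).1 hβ).2
    have hmem (n : ℕ) : c n ∈ β ↔ (c n).val.rank < β.val.rank :=
      ((hco n).rank_lt_iff_mem hβo).symm
    have hex : ∃ n, c n ∉ β := by
      obtain ⟨n, hn⟩ := hLc β hβ
      exact ⟨n, mem_asymm hn⟩
    classical
    have hlt (k : ℕ) (hk : c k ∈ β) : k < Nat.find hex := by
      by_contra! hcon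
      exact Nat.find_spec hex ((hmem _).2 ((hmono.monotone hcon).trans_lt ((hmem k).1 hk)))
    obtain ⟨m, hm⟩ := Nat.exists_eq_add_one_of_ne_zero (hlt i hxβ).ne_bot
    refine ⟨c m, (hS _).2 ⟨m, rfl⟩, not_not.1 (Nat.find_min hex (by omega)), fun y hy hyβ => ?_⟩
    obtain ⟨k, rfl⟩ := (hS y).1 hy
    have hkm : k ≤ m := by have := hlt k hyβ; omega
    rcases hkm.lt_or_eq with hkm | rfl
    · exact Or.inl (((hco k).rank_lt_iff_mem (hco m)).1 (hmono hkm))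
    · exact Or.inr rfl
  have hsub : L.val ⊆ (j L).val := by
    refine vsub_iff.1 fun x hx => ?_
    obtain ⟨n, hn⟩ := hLc x hx
    have hn' : c (n + 1) ∈ j L := hcs n ▸ (emb_mem j).2 (hcL n)
    exact hjLo.mem_trans ((hco (n + 1)).mem_trans hn (h.iterate_mem n)) hn'
  rcases (hLo.subset_iff_eq_or_mem hjLo).1 hsub with he | hlt
  · exact Subtype.ext he.symm
  · have hcS (n : ℕ) : c (n + 1) ∈ j S := hcs n ▸ (emb_mem j).2 ((hS _).2 ⟨n, rfl⟩)
    obtain ⟨m, -, hmL, hmax⟩ := (emb_noLimit j).2 hno L hlt ⟨c 1, hcS 0, hcL 1⟩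
    obtain ⟨n, hn⟩ := hLc m hmL
    have hmn : m ∈ c (n + 1) := (hco (n + 1)).mem_trans hn (h.iterate_mem n)
    rcases hmax _ (hcS n) (hcL (n + 1)) with h' | h'
    · exact absurd h' (mem_asymm hmn)
    · rw [h'] at hmn
      exact absurd hmn (mem_irrefl _)

/-- If `λ + 1 < δ`, then `j` fixes `V_λ` and is cofinal in it, so the critical point would be a value
of `j`. -/
theorem le_sup_add_one (h : IsCrit j c₀) (hlam : lam = ⨆ n, ((⇑j)^[n] c₀).val.rank) :
    δ ≤ lam + 1 := by
  by_contra! hδ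
  have hδ' : lam < δ := (lt_add_one lam).trans hδ
  obtain ⟨L, hL⟩ : ∃ L : Vrank δ, L.val = lam.toZFSet :=
    exists_val ((Ordinal.rank_toZFSet _).trans_lt hδ')
  obtain ⟨W, hW⟩ : ∃ W : Vrank δ, W.val = V_ lam :=
    exists_val ((rank_vonNeumann _).trans_lt hδ')
  have hLr : L.val.rank = lam := by rw [hL, Ordinal.rank_toZFSet]
  have hjW : j W = W := by
    refine Vrank.val_inj.1 ?_
    rw [emb_vonNeumann j (o := L) (hL ▸ isOrdinal_toZFSet _) (by rw [hLr, hW]),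
      h.emb_sup hlam hL, hLr, hW]
  have hWmem (x : Vrank δ) : x ∈ W ↔ x.val.rank < lam := by
    rw [← mem_vonNeumann, ← hW]
    rfl
  have hcof : ∀ y, y ∈ W → ∃ u, u ∈ W ∧ y ∈ j u := by
    intro y hy
    obtain ⟨n, hn⟩ := exists_rank_gt hlam ((hWmem y).1 hy)
    obtain ⟨u, hu⟩ : ∃ u : Vrank δ, u.val = V_ ((⇑j)^[n] c₀).val.rank :=
      exists_val ((rank_vonNeumann _).trans_lt ((⇑j)^[n] c₀).2)
    refine ⟨u, ?_, ?_⟩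
    · rw [hWmem, hu, rank_vonNeumann]
      exact h.rank_lt hlam n
    · change y.val ∈ (j u).val
      rw [emb_vonNeumann j (h.iterate_ord n) hu, ← Function.iterate_succ_apply' j, mem_vonNeumann]
      exact hn.trans (h.strictMono n.lt_succ_self)
  obtain ⟨x, hx⟩ := exists_preimage (zero_le.trans_lt (h.rank_lt hlam 0))
    (h.add_one_lt hlam) hδ hW hjW hcof ((hWmem c₀).2 (h.rank_lt hlam 0))
  exact h.notMem_range x hx

theorem of_isLeast {κ : Ordinal}
    (hκ : IsLeast {α : Ordinal | ∃ x : Vrank δ, x.val.IsOrdinal ∧ x.val.rank = α ∧ j x ≠ x} κ)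
    (ho : c₀.val.IsOrdinal) (hr : c₀.val.rank = κ) : IsCrit j c₀ := by
  obtain ⟨⟨x, hx, hxr, hmv⟩, hmin⟩ := hκ
  obtain rfl : x = c₀ := Vrank.val_inj.1 ((hx.rank_inj ho).1 (hxr.trans hr.symm))
  refine ⟨ho, hmv, fun y hy => ?_⟩
  by_contra hne
  have := hmin ⟨y, ho.mem hy, rfl, hne⟩
  rw [← hr] at this
  exact not_lt_of_ge this (rank_lt_of_mem hy)

end IsCrit

end Supremum

/-- The Kunen inconsistency for rank initial segments.  If `j : V_δ → V_δ` is a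
non-identity elementary embedding with critical point `κ` (the least ordinal whose
corresponding von Neumann ordinal `c₀ ∈ V_δ` is moved by `j`), critical sequence
`critSeq n` (the ordinal corresponding to the `n`-th iterate of `j` applied to `c₀`,
read off as its rank), and `λ` the supremum of the critical sequence, then
`δ ≤ λ + 1`.  In particular, for no ordinal `l` is there a non-identity elementary
self-embedding of `V_{l+2}`. -/
theorem kunen_inconsistency :
    (∀ (δ : Ordinal) (j : Vrank δ ↪ₑ[setLanguage] Vrank δ), ⇑j ≠ id →
      ∀ κ : Ordinal,
        IsLeast {α : Ordinal |
          ∃ x : Vrank δ, x.val.IsOrdinal ∧ x.val.rank = α ∧ j x ≠ x} κ →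
        ∀ c₀ : Vrank δ, c₀.val.IsOrdinal → c₀.val.rank = κ →
          ∀ critSeq : ℕ → Ordinal, (∀ n, critSeq n = ((⇑j)^[n] c₀).val.rank) →
            ∀ lam : Ordinal, lam = (⨆ n, critSeq n) → δ ≤ lam + 1) ∧
    (∀ (l : Ordinal) (j : Vrank (l + 2) ↪ₑ[setLanguage] Vrank (l + 2)), ⇑j = id) := by
  refine ⟨?_, ?_⟩
  · intro δ j _ κ hκ c₀ ho hr critSeq hcrit lam hlam
    refine (IsCrit.of_isLeast hκ ho hr).le_sup_add_one ?_
    rw [hlam]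
    exact iSup_congr hcrit
  · intro l j
    by_contra hid
    have hne : {α : Ordinal | ∃ x : Vrank (l + 2), x.val.IsOrdinal ∧ x.val.rank = α ∧
        j x ≠ x}.Nonempty := by
      by_contra hempty
      refine hid (eq_id_of_fixes_ordinals j fun x hx => ?_)
      by_contra hmv
      exact hempty ⟨_, x, hx, rfl, hmv⟩
    have hκ : IsLeast _ (sInf _) := ⟨csInf_mem hne, fun _ => csInf_le'⟩
    obtain ⟨c₀, ho, hr, -⟩ := hκ.1
    have hc : IsCrit j c₀ := IsCrit.of_isLeast hκ ho hr
    have hle := hc.le_sup_add_one rfl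
    -- As `κₙ < κₙ₊₁ < l + 2`, each `κₙ` is at most `l`.
    have hsup : (⨆ n, ((⇑j)^[n] c₀).val.rank) ≤ l := Ordinal.iSup_le fun n => by
      have h₁ := hc.strictMono n.lt_succ_self
      have h₂ : ((⇑j)^[n + 1] c₀).val.rank < l + 1 + 1 := by
        rw [add_assoc, one_add_one_eq_two]
        exact ((⇑j)^[n + 1] c₀).2
      exact Order.lt_add_one_iff.1 (h₁.trans_le (Order.lt_add_one_iff.1 h₂))
    have h₃ : l + 1 + 1 ≤ l + 1 := by
      rw [add_assoc, one_add_one_eq_two]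
      exact hle.trans (by gcongr)
    exact absurd h₃ (not_le.2 (lt_add_one _))
end

section
/- Let M be a topological monoid and R a left congruence on M, i.e. an equivalence relation on M such that x R y implies (a * x) R (a * y) for all a ∈ M. Then the following are equivalent: (1) the induced left action of M on the quotient M / R (given by a • [x] = [a * x]) is continuous when M / R carries the discrete topology; (2) for every m ∈ M, the relation Rm⁻¹ = {(n, n') : (n * m) R (n' * m)} has open equivalence classes; (3) R has open equivalence classes; (4) R is open as a subset of M × M (with the product topology). -/
/-!
Since `M / R` is discrete, the action is continuous iff each orbit map `n ↦ [n * m]` is locally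
constant, i.e. iff the sets `{n' | R (n' * m) (n * m)}` are open. At `m = 1` these are the classes
of `R`; conversely each of them is the preimage of a class of `R` under right multiplication by `m`.
Finally, classes are slices of `R ⊆ M × M`, and `R` is the union of the products of its classes
with themselves.
-/

/-- For a topological monoid `M` and a left congruence `R` on `M` (an equivalence
relation with `x R y → (a * x) R (a * y)`), the following are equivalent:
(1) the induced left action of `M` on the discrete quotient `M / R` is continuous;
(2) for every `m`, the relation `{(n, n') | (n * m) R (n' * m)}` has open classes;
(3) `R` has open equivalence classes;
(4) `R` is open in `M × M`. -/
theorem left_congruence_continuity_tfae {M : Type*} [Monoid M] [TopologicalSpace M]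
    (hmul : Continuous fun p : M × M => p.1 * p.2)
    (R : M → M → Prop) (hR : Equivalence R)
    (hcong : ∀ a x y : M, R x y → R (a * x) (a * y)) :
    letI s : Setoid M := ⟨R, hR⟩
    letI : TopologicalSpace (Quotient s) := ⊥
    ∀ act : M → Quotient s → Quotient s,
      (∀ a x : M, act a (Quotient.mk s x) = Quotient.mk s (a * x)) →
      List.TFAE [
        Continuous (fun p : M × Quotient s => act p.1 p.2),
        ∀ m n : M, IsOpen {n' : M | R (n' * m) (n * m)},
        ∀ n : M, IsOpen {n' : M | R n' n},
        IsOpen {p : M × M | R p.1 p.2}] := by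
  intro act hact
  let s : Setoid M := ⟨R, hR⟩
  let : TopologicalSpace (Quotient s) := ⊥
  have : DiscreteTopology (Quotient s) := ⟨rfl⟩
  tfae_have 1 → 2 := by
    intro h m n
    have hc : Continuous fun n' : M => act n' (Quotient.mk s m) :=
      h.comp (continuous_id.prodMk continuous_const)
    convert (isOpen_discrete {Quotient.mk s (n * m)}).preimage hc using 1
    ext n'
    change R (n' * m) (n * m) ↔ act n' (Quotient.mk s m) = Quotient.mk s (n * m)
    rw [hact]
    exact (Quotient.eq (r := s)).symm
  tfae_have 2 → 3 := by
    intro h n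
    simpa using h 1 n
  tfae_have 3 → 4 := by
    intro h
    rw [isOpen_prod_iff]
    intro a b hab
    refine ⟨_, _, h b, h b, hab, hR.refl b, ?_⟩
    rintro ⟨x, y⟩ ⟨hx, hy⟩
    exact hR.trans hx (hR.symm hy)
  tfae_have 4 → 3 := by
    intro h n
    exact h.preimage (f := fun n' : M => (n', n)) (by fun_prop)
  tfae_have 3 → 1 := by
    intro h
    rw [continuous_prod_of_discrete_right]
    intro q
    induction q using Quotient.inductionOn with | _ x => ?_
    simp only [hact]
    have hmk : Continuous (Quotient.mk s) := by
      rw [continuous_discrete_rng]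
      intro q
      induction q using Quotient.inductionOn with | _ y => ?_
      convert h y using 1
      ext n'
      exact Quotient.eq (r := s)
    exact hmk.comp (hmul.comp (continuous_id.prodMk continuous_const))
  tfae_finish
end
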